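/- Let n ≥ 3 be an integer and let λ be a real number with λ ≥ (3n + √(5n² − 4n))/(n² + n). If f is a close-to-convex function on the unit disk with Taylor coefficients a_k, then |λ a_n² − a_{2n−1}| ≤ λ n² − (2n − 1). -/

import Mathlib

open Complex Metric

/-- The k-th Taylor coefficient of `f` at `0`: `a_k = f^{(k)}(0)/k!`. -/
noncomputable def taylorCoeff (f : ℂ → ℂ) (k : ℕ) : ℂ :=
  iteratedDeriv k f 0 / (Nat.factorial k)

/-- `g` is a (normalized) starlike function on the unit disk. -/
def IsStarlikeFn (g : ℂ → ℂ) : Prop :=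
  DifferentiableOn ℂ g (ball (0 : ℂ) 1) ∧ g 0 = 0 ∧ deriv g 0 = 1 ∧
    ∀ z ∈ ball (0 : ℂ) 1 \ {0}, 0 < (z * deriv g z / g z).re

/-- `f` is a (normalized) close-to-convex function on the unit disk. -/
def IsCloseToConvex (f : ℂ → ℂ) : Prop :=
  DifferentiableOn ℂ f (ball (0 : ℂ) 1) ∧ f 0 = 0 ∧ deriv f 0 = 1 ∧
    ∃ θ : ℝ, ∃ g : ℂ → ℂ, IsStarlikeFn g ∧
      ∀ z ∈ ball (0 : ℂ) 1 \ {0},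
        0 < (Complex.exp (θ * Complex.I) * z * deriv f z / g z).re

/-!
If `f` is close-to-convex with respect to the starlike function `g`, then `f' = p (g / z)`, where
`p 0 = 1` and `p` takes values in a rotated right half-plane, and by Marx–Strohhäcker (a consequence
of Jack's lemma) `g / z = k²` with `Re k ≥ 1 / 2`. Herglotz's formula makes `p` and `k` limits of
averages of `(1 + x z) / (1 - y z)` and `1 / (1 - y z)` with `|x| = |y| = 1`, and Feynman's
parametrisation turns the products of such functions into averages again: the Taylor series of `f'`
lies in the closed convex hull of the functions `(1 + x z) / (1 - y z)³`.

Choose `ζ` with `|ζ| = 1` such that `|λ aₙ² - a₂ₙ₋₁| = Re (ζ² (λ aₙ² - a₂ₙ₋₁))`. The right-hand side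
is at most `λ (Re ζ aₙ)² - Re (ζ² a₂ₙ₋₁)`, which is convex in `f`, so it suffices to bound it when
`f' = (1 + x z) / (1 - y z)³`, where the deficit is a sum of squares.
-/

open Filter MeasureTheory PowerSeries Topology
open scoped ComplexConjugate Nat

section CoefficientHull

/-- The coefficient functionals on power series: finite linear combinations of the maps
`S ↦ coeff n S`, i.e. the functionals continuous for coefficientwise convergence. -/
def coeffDual : Submodule ℂ (Module.Dual ℂ ℂ⟦X⟧) :=
  Submodule.span ℂ (Set.range fun n => coeff n)

variable {Λ : Module.Dual ℂ ℂ⟦X⟧} {α : Type*} {S : α → ℂ⟦X⟧} {T : ℂ⟦X⟧}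

lemma coeff_mem_coeffDual (n : ℕ) : coeff n ∈ coeffDual :=
  Submodule.subset_span ⟨n, rfl⟩

lemma comp_mulRight_mem_coeffDual (hΛ : Λ ∈ coeffDual) (G : ℂ⟦X⟧) :
    Λ ∘ₗ LinearMap.mulRight ℂ G ∈ coeffDual := by
  induction hΛ using Submodule.span_induction with
  | mem _ h =>
    obtain ⟨n, rfl⟩ := h
    have hconv : coeff n ∘ₗ LinearMap.mulRight ℂ G =
        ∑ p ∈ Finset.HasAntidiagonal.antidiagonal n, coeff p.2 G • coeff p.1 := by
      ext S
      simp [coeff_mul, mul_comm (coeff _ G)]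
    rw [hconv]
    exact Submodule.sum_mem _ fun p _ => Submodule.smul_mem _ _ (coeff_mem_coeffDual p.1)
  | zero => simp
  | add _ _ _ _ h₁ h₂ => simpa [LinearMap.add_comp] using add_mem h₁ h₂
  | smul c _ _ h => simpa [LinearMap.smul_comp] using Submodule.smul_mem _ c h

lemma tendsto_of_mem_coeffDual (hΛ : Λ ∈ coeffDual) {l : Filter α}
    (h : ∀ n, Tendsto (fun t => coeff n (S t)) l (𝓝 (coeff n T))) :
    Tendsto (fun t => Λ (S t)) l (𝓝 (Λ T)) := by
  induction hΛ using Submodule.span_induction with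
  | mem _ h' => obtain ⟨n, rfl⟩ := h'; exact h n
  | zero => exact tendsto_const_nhds
  | add _ _ _ _ h₁ h₂ => exact h₁.add h₂
  | smul c _ _ h => exact h.const_mul c

lemma differentiable_of_mem_coeffDual (hΛ : Λ ∈ coeffDual) {S : ℂ → ℂ⟦X⟧}
    (h : ∀ n, Differentiable ℂ fun t => coeff n (S t)) : Differentiable ℂ fun t => Λ (S t) := by
  induction hΛ using Submodule.span_induction with
  | mem _ h' => obtain ⟨n, rfl⟩ := h'; exact h n
  | zero => exact differentiable_const 0
  | add _ _ _ _ h₁ h₂ => exact h₁.add h₂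
  | smul c _ _ h => exact h.const_mul c

lemma integrable_and_eq_integral_of_mem_coeffDual [MeasurableSpace α] {μ : Measure α}
    (hΛ : Λ ∈ coeffDual) (hint : ∀ n, Integrable (fun t => coeff n (S t)) μ)
    (hT : ∀ n, coeff n T = ∫ t, coeff n (S t) ∂μ) :
    Integrable (fun t => Λ (S t)) μ ∧ Λ T = ∫ t, Λ (S t) ∂μ := by
  induction hΛ using Submodule.span_induction with
  | mem _ h => obtain ⟨n, rfl⟩ := h; exact ⟨hint n, hT n⟩
  | zero => simp
  | add _ _ _ _ h₁ h₂ =>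
    exact ⟨h₁.1.add h₂.1, by
      simp only [LinearMap.add_apply, h₁.2, h₂.2, integral_add h₁.1 h₂.1]⟩
  | smul c _ _ h =>
    exact ⟨h.1.const_mul c, by
      simp only [LinearMap.smul_apply, smul_eq_mul, h.2, integral_const_mul]⟩

/-- The closed convex hull of a set of power series for coefficientwise convergence, encoded as the
intersection of the closed half-spaces containing the set, so that no topology on `ℂ⟦X⟧` and no
Hahn–Banach theorem is needed. -/
def coeffHull (F : Set ℂ⟦X⟧) : Set ℂ⟦X⟧ :=
  {S | ∀ Λ ∈ coeffDual, ∀ M : ℝ, (∀ T ∈ F, (Λ T).re ≤ M) → (Λ S).re ≤ M}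

variable {E F G : Set ℂ⟦X⟧}

lemma subset_coeffHull (F : Set ℂ⟦X⟧) : F ⊆ coeffHull F :=
  fun S hS _ _ _ h => h S hS

lemma mul_add_mem_coeffHull {S : ℂ⟦X⟧} (hS : S ∈ coeffHull F) (A B : ℂ⟦X⟧)
    (h : ∀ T ∈ F, T * A + B ∈ coeffHull E) : S * A + B ∈ coeffHull E := by
  intro Λ hΛ M hM
  have hbound : ∀ T ∈ F, ((Λ ∘ₗ LinearMap.mulRight ℂ A) T).re ≤ M - (Λ B).re := fun T hT => by
    have := h T hT Λ hΛ M hM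
    rw [map_add, add_re] at this
    simpa using le_sub_right_of_add_le this
  have := hS _ (comp_mulRight_mem_coeffDual hΛ A) _ hbound
  rw [map_add, add_re]
  exact add_le_of_le_sub_right (by simpa using this)

lemma mul_mem_coeffHull {S T : ℂ⟦X⟧} (hS : S ∈ coeffHull F) (hT : T ∈ coeffHull G)
    (h : ∀ A ∈ F, ∀ B ∈ G, A * B ∈ coeffHull E) : S * T ∈ coeffHull E := by
  rw [← add_zero (S * T)]
  refine mul_add_mem_coeffHull hS T 0 fun A hA => ?_
  rw [mul_comm A T]
  exact mul_add_mem_coeffHull hT A 0 fun B hB => by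
    rw [mul_comm B A, add_zero]
    exact h A hA B hB

lemma mem_coeffHull_of_tendsto {l : Filter α} [l.NeBot]
    (hlim : ∀ n, Tendsto (fun t => coeff n (S t)) l (𝓝 (coeff n T)))
    (hS : ∀ᶠ t in l, S t ∈ coeffHull F) : T ∈ coeffHull F := fun Λ hΛ M hM =>
  le_of_tendsto ((continuous_re.tendsto _).comp (tendsto_of_mem_coeffDual hΛ hlim))
    (hS.mono fun _ ht => ht Λ hΛ M hM)

lemma mem_coeffHull_of_integral [MeasurableSpace α] {μ : Measure α} {w : α → ℝ}
    (hw : ∀ᵐ t ∂μ, 0 ≤ w t) (hw₁ : ∫ t, w t ∂μ = 1) (hS : ∀ᵐ t ∂μ, S t ∈ coeffHull F)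
    (hint : ∀ n, Integrable (fun t => w t * coeff n (S t)) μ)
    (hT : ∀ n, coeff n T = ∫ t, w t * coeff n (S t) ∂μ) : T ∈ coeffHull F := by
  intro Λ hΛ M hM
  obtain ⟨hΛint, hΛT⟩ := integrable_and_eq_integral_of_mem_coeffDual hΛ
    (S := fun t => (w t : ℂ) • S t) (by simpa using hint) (by simpa using hT)
  have hwint : Integrable w μ := integrable_of_integral_eq_one hw₁
  calc (Λ T).re = ∫ t, (Λ ((w t : ℂ) • S t)).re ∂μ := by
        rw [hΛT]; exact (integral_re hΛint).symm
    _ ≤ ∫ t, w t * M ∂μ := by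
        refine integral_mono_ae hΛint.re (hwint.mul_const M) ?_
        filter_upwards [hw, hS] with t ht hSt
        simpa using mul_le_mul_of_nonneg_left (hSt Λ hΛ M hM) ht
    _ = M := by rw [integral_mul_const, hw₁, one_mul]

lemma mem_coeffHull_of_circleAverage {c : ℂ} {r : ℝ} {w : ℂ → ℝ} {S : ℂ → ℂ⟦X⟧}
    (hw : ∀ z ∈ sphere c |r|, 0 ≤ w z) (hw₁ : Real.circleAverage w c r = 1)
    (hS : ∀ z ∈ sphere c |r|, S z ∈ coeffHull F)
    (hint : ∀ n, CircleIntegrable (fun z => w z * coeff n (S z)) c r)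
    (hT : ∀ n, coeff n T = Real.circleAverage (fun z => w z * coeff n (S z)) c r) :
    T ∈ coeffHull F := by
  simp only [Real.circleAverage_def, intervalIntegral.integral_of_le Real.two_pi_pos.le] at hw₁ hT
  refine mem_coeffHull_of_integral (μ := volume.restrict (Set.Ioc 0 (2 * Real.pi)))
    (w := fun θ => (2 * Real.pi)⁻¹ * w (circleMap c r θ)) (S := fun θ => S (circleMap c r θ))
    (.of_forall fun θ => ?_) ?_ (.of_forall fun θ => hS _ (circleMap_mem_sphere' c r θ))
    (fun n => ?_) fun n => ?_
  · have := hw _ (circleMap_mem_sphere' c r θ)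
    positivity
  · rwa [integral_const_mul]
  · simpa [mul_assoc] using ((hint n).1.integrable).const_mul ((2 * Real.pi)⁻¹ : ℂ)
  · simp only [ofReal_mul, mul_assoc, integral_const_mul, hT n, real_smul]

/-- The maximum principle for the subharmonic function `w ↦ Re Λ (rescale w S)`. -/
lemma rescale_mem_coeffHull (S : ℂ⟦X⟧) {w : ℂ} (hw : ‖w‖ ≤ 1) :
    rescale w S ∈ coeffHull ((fun y => rescale y S) '' sphere (0 : ℂ) 1) := by
  intro Λ hΛ M hM
  have hdiff : Differentiable ℂ fun w : ℂ => Complex.exp (Λ (rescale w S)) :=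
    (differentiable_of_mem_coeffDual hΛ fun n => by simp only [coeff_rescale]; fun_prop).cexp
  have hmax : ‖Complex.exp (Λ (rescale w S))‖ ≤ Real.exp M := by
    refine norm_le_of_forall_mem_frontier_norm_le (isBounded_ball (x := (0 : ℂ)) (r := 1))
      hdiff.diffContOnCl (fun y hy => ?_) (by simpa [closure_ball] using hw)
    rw [frontier_ball _ one_ne_zero] at hy
    simpa [norm_exp] using hM _ (Set.mem_image_of_mem _ hy)
  simpa [norm_exp] using hmax

/-- A convex function is a supremum of affine ones, so its bounds pass to the hull. -/
lemma mul_sq_re_add_re_le_of_mem_coeffHull {Λ₁ Λ₂ : Module.Dual ℂ ℂ⟦X⟧} (h₁ : Λ₁ ∈ coeffDual)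
    (h₂ : Λ₂ ∈ coeffDual) {c M : ℝ} (hc : 0 ≤ c) {S : ℂ⟦X⟧} (hS : S ∈ coeffHull F)
    (hM : ∀ T ∈ F, c * (Λ₁ T).re ^ 2 + (Λ₂ T).re ≤ M) :
    c * (Λ₁ S).re ^ 2 + (Λ₂ S).re ≤ M := by
  set t := (Λ₁ S).re
  have heval (T : ℂ⟦X⟧) :
      ((((2 * c * t : ℝ) : ℂ) • Λ₁ + Λ₂) T).re = 2 * c * t * (Λ₁ T).re + (Λ₂ T).re := by
    rw [LinearMap.add_apply, LinearMap.smul_apply, smul_eq_mul, add_re, re_ofReal_mul]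
  have htangent := hS _ (add_mem (Submodule.smul_mem _ ((2 * c * t : ℝ) : ℂ) h₁) h₂)
    (M + c * t ^ 2) fun T hT => by
      rw [heval]
      linarith [hM T hT, mul_nonneg hc (sq_nonneg ((Λ₁ T).re - t))]
  rw [heval] at htangent
  linarith

end CoefficientHull

section CauchyPowers

/-- The power series of `(1 - y z)⁻ᵖ`. -/
noncomputable def cauchyPow (p : ℕ) (y : ℂ) : ℂ⟦X⟧ :=
  rescale y (invOneSubPow ℂ p : ℂ⟦X⟧)

lemma coeff_cauchyPow_succ (p n : ℕ) (y : ℂ) :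
    coeff n (cauchyPow (p + 1) y) = (p + n).choose p * y ^ n := by
  rw [cauchyPow, coeff_rescale, invOneSubPow_val_succ_eq_mk_add_choose, coeff_mk, mul_comm]

lemma integral_pow_mul_one_sub_pow (i j : ℕ) :
    ∫ s in (0 : ℝ)..1, ((s : ℂ) ^ i * (1 - (s : ℂ)) ^ j) = (i ! * j ! : ℂ) / (i + j + 1)! := by
  have hbeta := betaIntegral_eq_Gamma_mul_div (i + 1) (j + 1)
    (by rw [add_re, natCast_re, one_re]; positivity)
    (by rw [add_re, natCast_re, one_re]; positivity)
  rw [Gamma_nat_eq_factorial, Gamma_nat_eq_factorial,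
    show (i : ℂ) + 1 + (j + 1) = ((i + j + 1 : ℕ) : ℂ) + 1 by push_cast; ring,
    Gamma_nat_eq_factorial] at hbeta
  rw [← hbeta, betaIntegral]
  simp

lemma choose_eq_mul_factorial_div (p n i : ℕ) (hi : i ≤ n) :
    ((p + i).choose p : ℂ) = (p + 1) * (p + 1 + n).choose (p + 1) * n.choose i *
      (((p + i)! * (n - i)! : ℂ) / (p + i + (n - i) + 1)!) := by
  rw [Nat.cast_add_choose, Nat.cast_add_choose, Nat.cast_choose ℂ hi,
    show p + i + (n - i) + 1 = p + 1 + n by lia, Nat.factorial_succ p]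
  push_cast
  field_simp [Nat.factorial_ne_zero]

/-- Feynman's parametrisation `A⁻⁽ᵖ⁺¹⁾ B⁻¹ = ∫₀¹ (p + 1) sᵖ (s A + (1 - s) B)⁻⁽ᵖ⁺²⁾ ds`. -/
lemma coeff_cauchyPow_mul_cauchyPow_one (p n : ℕ) (w a : ℂ) :
    coeff n (cauchyPow (p + 1) w * cauchyPow 1 a) =
      ∫ s in (0 : ℝ)..1, (((p + 1) * s ^ p : ℝ) : ℂ) *
        coeff n (cauchyPow (p + 2) (s * w + (1 - s) * a)) := by
  have hexpand (s : ℝ) :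
      (((p + 1) * s ^ p : ℝ) : ℂ) * coeff n (cauchyPow (p + 2) (s * w + (1 - s) * a)) =
        ∑ i ∈ Finset.range (n + 1),
          ((p + 1) * (p + 1 + n).choose (p + 1) * n.choose i * (w ^ i * a ^ (n - i))) *
            ((s : ℂ) ^ (p + i) * (1 - (s : ℂ)) ^ (n - i)) := by
    rw [coeff_cauchyPow_succ, add_pow, Finset.mul_sum, Finset.mul_sum]
    refine Finset.sum_congr rfl fun i _ => ?_
    rw [mul_pow, mul_pow]
    push_cast
    ring
  simp_rw [hexpand]
  rw [intervalIntegral.integral_finsetSum fun i _ =>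
      Continuous.intervalIntegrable (by fun_prop) 0 1,
    coeff_mul, Finset.Nat.sum_antidiagonal_eq_sum_range_succ_mk]
  refine Finset.sum_congr rfl fun i hi => ?_
  rw [intervalIntegral.integral_const_mul, integral_pow_mul_one_sub_pow, coeff_cauchyPow_succ,
    coeff_cauchyPow_succ 0, Nat.choose_zero_right,
    choose_eq_mul_factorial_div p n i (Finset.mem_range_succ_iff.1 hi)]
  ring

lemma cauchyPow_mul_cauchyPow_one_mem_coeffHull (p : ℕ) {w a : ℂ} (hw : ‖w‖ ≤ 1) (ha : ‖a‖ ≤ 1) :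
    cauchyPow (p + 1) w * cauchyPow 1 a ∈ coeffHull (cauchyPow (p + 2) '' sphere 0 1) := by
  refine mem_coeffHull_of_integral (μ := volume.restrict (Set.Ioc (0 : ℝ) 1))
    (w := fun s => (p + 1) * s ^ p) (S := fun s : ℝ => cauchyPow (p + 2) (s * w + (1 - s) * a))
    ?_ ?_ ?_ (fun n => ?_) fun n => ?_
  · filter_upwards [ae_restrict_mem measurableSet_Ioc] with s hs
    have := hs.1
    positivity
  · rw [← intervalIntegral.integral_of_le zero_le_one, intervalIntegral.integral_const_mul,
      integral_pow]
    field_simp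
    simp
  · filter_upwards [ae_restrict_mem measurableSet_Ioc] with s hs
    have hconv : (s : ℂ) * w + (1 - s) * a ∈ closedBall (0 : ℂ) 1 := by
      simpa using convex_closedBall (0 : ℂ) 1 (mem_closedBall_zero_iff.2 hw)
        (mem_closedBall_zero_iff.2 ha) hs.1.le (sub_nonneg.2 hs.2) (add_sub_cancel s 1)
    exact rescale_mem_coeffHull _ (mem_closedBall_zero_iff.1 hconv)
  · simp only [coeff_cauchyPow_succ]
    exact Continuous.integrableOn_Ioc (by fun_prop)
  · rw [coeff_cauchyPow_mul_cauchyPow_one, intervalIntegral.integral_of_le zero_le_one]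

end CauchyPowers

section TaylorSeries

/-- The Taylor series at `0`, as a formal power series. -/
noncomputable def taylorSeries (F : ℂ → ℂ) : ℂ⟦X⟧ :=
  PowerSeries.mk (taylorCoeff F)

variable {F G : ℂ → ℂ}

lemma taylorSeries_congr (h : F =ᶠ[𝓝 0] G) : taylorSeries F = taylorSeries G := by
  ext n
  simp only [taylorSeries, coeff_mk, taylorCoeff, h.iteratedDeriv_eq n]

lemma taylorSeries_mul (hF : AnalyticAt ℂ F 0) (hG : AnalyticAt ℂ G 0) :
    taylorSeries (F * G) = taylorSeries F * taylorSeries G := by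
  ext n
  simp only [taylorSeries, coeff_mul, coeff_mk, taylorCoeff,
    iteratedDeriv_mul hF.contDiffAt hG.contDiffAt, Finset.sum_div,
    Finset.Nat.sum_antidiagonal_eq_sum_range_succ_mk]
  refine Finset.sum_congr rfl fun i hi => ?_
  rw [Nat.cast_choose _ (Finset.mem_range_succ_iff.1 hi)]
  field_simp [Nat.factorial_ne_zero]

lemma taylorSeries_const_add_const_mul (a b : ℂ) (F : ℂ → ℂ) :
    taylorSeries (fun z => a + b * F z) = C a + C b * taylorSeries F := by
  ext n
  cases n with
  | zero => simp [taylorSeries, taylorCoeff]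
  | succ n =>
    simp [taylorSeries, taylorCoeff, iteratedDeriv_const_add n.succ_pos,
      iteratedDeriv_const_mul_field, mul_div_assoc]

lemma coeff_taylorSeries_deriv (f : ℂ → ℂ) (n : ℕ) :
    coeff n (taylorSeries (deriv f)) = (n + 1) * taylorCoeff f (n + 1) := by
  simp only [taylorSeries, coeff_mk, taylorCoeff, iteratedDeriv_succ', Nat.factorial_succ]
  push_cast
  field_simp

end TaylorSeries

section Herglotz

open Real (circleAverage)

variable {F : ℂ → ℂ} {c : ℂ} {r : ℝ}

lemma circleAverage_re (hF : DifferentiableOn ℂ F (closedBall c |r|)) :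
    circleAverage (fun z => (F z).re) c r = (F c).re := by
  have hint : CircleIntegrable F c r :=
    (hF.continuousOn.mono sphere_subset_closedBall).circleIntegrable'
  rw [← (hF.mono closure_ball_subset_closedBall).diffContOnCl.circleAverage]
  exact reCLM.circleAverage_comp_comm hint

lemma circleAverage_ofReal_re (hF : DifferentiableOn ℂ F (closedBall c |r|)) :
    circleAverage (fun z => ((F z).re : ℂ)) c r = (F c).re := by
  have hint : CircleIntegrable (fun z => (F z).re) c r :=
    (continuous_re.comp_continuousOn
      (hF.continuousOn.mono sphere_subset_closedBall)).circleIntegrable'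
  rw [← circleAverage_re hF]
  exact ofRealCLM.circleAverage_comp_comm hint

lemma re_pos_of_forall_sphere_re_pos (hF : DifferentiableOn ℂ F (closedBall c |r|))
    (hpos : ∀ z ∈ sphere c |r|, 0 < (F z).re) : 0 < (F c).re := by
  have hcont : ContinuousOn (fun z => (F z).re) (sphere c |r|) :=
    continuous_re.comp_continuousOn (hF.continuousOn.mono sphere_subset_closedBall)
  obtain ⟨z, hz, hmin⟩ := (isCompact_sphere c |r|).exists_isMinOn
    (NormedSpace.sphere_nonempty.2 (abs_nonneg r)) hcont
  calc 0 < (F z).re := hpos z hz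
    _ = circleAverage (fun _ => (F z).re) c r := (Real.circleAverage_const _ _ _).symm
    _ ≤ circleAverage (fun z => (F z).re) c r :=
        Real.circleAverage_mono (circleIntegrable_const _ _ _) hcont.circleIntegrable'
          fun x hx => hmin hx
    _ = (F c).re := circleAverage_re hF

lemma circleAverage_div_pow_mul (hr : 0 < r) (hF : DifferentiableOn ℂ F (closedBall 0 r))
    (n : ℕ) : circleAverage (fun z => (r / z) ^ n * F z) 0 r = r ^ n * taylorCoeff F n := by
  have hpow (z : ℂ) : (z - 0)⁻¹ • ((r / z) ^ n * F z) =
      (r : ℂ) ^ n • ((1 / (z - 0) ^ (n + 1)) • F z) := by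
    simp only [smul_eq_mul, sub_zero, div_eq_mul_inv, mul_pow, pow_succ, mul_inv, inv_pow]
    ring
  rw [Real.circleAverage_eq_circleIntegral hr.ne', funext hpow, circleIntegral.integral_smul,
    hF.circleIntegral_one_div_sub_center_pow_smul hr n, taylorCoeff]
  simp only [smul_eq_mul]
  field_simp [two_pi_I_ne_zero]

lemma circleAverage_div_pow_mul_conj (hr : 0 < r) (hF : DifferentiableOn ℂ F (closedBall 0 r))
    (n : ℕ) : circleAverage (fun z => (r / z) ^ n * conj (F z)) 0 r = 0 ^ n * conj (F 0) := by
  have hdiff : DifferentiableOn ℂ (fun z => (z / r) ^ n * F z) (closedBall 0 |r|) := by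
    rw [abs_of_pos hr]
    fun_prop
  have hint : CircleIntegrable (fun z => (z / r) ^ n * F z) 0 r :=
    (hdiff.continuousOn.mono sphere_subset_closedBall).circleIntegrable'
  have hconj : Set.EqOn (fun z : ℂ => (r / z) ^ n * conj (F z))
      (conjCLE ∘ fun z => (z / r) ^ n * F z) (sphere 0 |r|) := fun z hz => by
    have hz' : ‖z / r‖ = 1 := by
      rw [mem_sphere_zero_iff_norm] at hz
      simp [hz, hr.ne']
    simp only [Function.comp_apply, conjCLE_apply, map_mul, map_pow]
    rw [← inv_eq_conj hz', inv_div]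
  rw [Real.circleAverage_congr_sphere hconj]
  refine (conjCLE.toContinuousLinearMap.circleAverage_comp_comm hint).trans ?_
  rw [(hdiff.mono closure_ball_subset_closedBall).diffContOnCl.circleAverage]
  simp

lemma circleIntegrable_div_pow_mul (hr : r ≠ 0) {G : ℂ → ℂ} (hG : ContinuousOn G (sphere 0 |r|))
    (n : ℕ) : CircleIntegrable (fun z => (r / z) ^ n * G z) 0 r := by
  have hne : ∀ z ∈ sphere (0 : ℂ) |r|, z ≠ 0 := fun z hz => by
    rw [mem_sphere_zero_iff_norm] at hz
    simp [← norm_ne_zero_iff, hz, hr]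
  exact (((continuousOn_const.div continuousOn_id hne).pow n).mul hG).circleIntegrable'

lemma circleAverage_div_pow_mul_two_re (hr : 0 < r) (hF : DifferentiableOn ℂ F (closedBall 0 r))
    (n : ℕ) : circleAverage (fun z => (r / z) ^ n * ((2 * (F z).re : ℝ) : ℂ)) 0 r =
      r ^ n * taylorCoeff F n + 0 ^ n * conj (F 0) := by
  have hcont : ContinuousOn F (sphere 0 |r|) := by
    rw [abs_of_pos hr]
    exact hF.continuousOn.mono sphere_subset_closedBall
  have hcont_conj : ContinuousOn (fun z => conj (F z)) (sphere 0 |r|) :=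
    continuous_conj.comp_continuousOn hcont
  simp_rw [← add_conj, mul_add]
  rw [Real.circleAverage_fun_add (circleIntegrable_div_pow_mul hr.ne' hcont n)
    (circleIntegrable_div_pow_mul hr.ne' hcont_conj n), circleAverage_div_pow_mul hr hF,
    circleAverage_div_pow_mul_conj hr hF]

/-- The power series of `(b + conj b * y * z) / (1 - y * z)`, which for `‖y‖ = 1` and `0 < b.re`
maps the unit disc conformally onto the right half-plane and `0` to `b`. -/
noncomputable def halfPlaneMap (b y : ℂ) : ℂ⟦X⟧ :=
  C ((2 * b.re : ℝ) : ℂ) * cauchyPow 1 y - C (conj b)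

lemma coeff_halfPlaneMap (n : ℕ) (b y : ℂ) :
    coeff n (halfPlaneMap b y) = y ^ n * ((2 * b.re : ℝ) : ℂ) - 0 ^ n * conj b := by
  rw [halfPlaneMap, map_sub, coeff_C_mul, coeff_cauchyPow_succ 0, coeff_C]
  simp [zero_pow_eq, mul_comm]

/-- Herglotz's formula: `z ↦ F (r z)` is the mean over the circle `‖ζ‖ = r` of the functions
`halfPlaneMap (F 0) (r / ζ)` with weights `(F ζ).re / (F 0).re`. -/
lemma rescale_taylorSeries_mem_coeffHull (hr : 0 < r) (hF : DifferentiableOn ℂ F (closedBall 0 r))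
    (hre : ∀ z ∈ sphere 0 r, 0 ≤ (F z).re) (hF₀ : 0 < (F 0).re) :
    rescale (r : ℂ) (taylorSeries F) ∈ coeffHull (halfPlaneMap (F 0) '' sphere 0 1) := by
  have hr' : |r| = r := abs_of_pos hr
  have hF₀' : ((F 0).re : ℂ) ≠ 0 := by exact_mod_cast hF₀.ne'
  have hcoeff (n : ℕ) (z : ℂ) :
      (((F 0).re⁻¹ * (F z).re : ℝ) : ℂ) * coeff n (halfPlaneMap (F 0) (r / z)) =
        (r / z) ^ n * ((2 * (F z).re : ℝ) : ℂ) -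
          (0 ^ n * conj (F 0) / (F 0).re) • ((F z).re : ℂ) := by
    rw [coeff_halfPlaneMap, smul_eq_mul]
    push_cast
    field_simp
  rw [← hr'] at hF
  have hcont : ContinuousOn (fun z => (F z).re) (sphere 0 |r|) :=
    continuous_re.comp_continuousOn (hF.continuousOn.mono sphere_subset_closedBall)
  have hint (n : ℕ) : CircleIntegrable (fun z => (r / z) ^ n * ((2 * (F z).re : ℝ) : ℂ)) 0 r :=
    circleIntegrable_div_pow_mul hr.ne'
      (continuous_ofReal.comp_continuousOn (hcont.const_smul (2 : ℝ))) n
  have hint_const (a : ℂ) : CircleIntegrable (fun z => a • ((F z).re : ℂ)) 0 r :=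
    (continuous_ofReal.comp_continuousOn hcont).circleIntegrable'.const_smul
  refine mem_coeffHull_of_circleAverage (w := fun z => (F 0).re⁻¹ * (F z).re) (c := 0) (r := r)
    (S := fun z => halfPlaneMap (F 0) (r / z)) (fun z hz => ?_) ?_
    (fun z hz => subset_coeffHull _ ⟨r / z, ?_, rfl⟩) (fun n => ?_) fun n => ?_
  · rw [hr'] at hz
    exact mul_nonneg (inv_nonneg.2 hF₀.le) (hre z hz)
  · simp only [← smul_eq_mul, Real.circleAverage_fun_smul, circleAverage_re hF]
    exact inv_mul_cancel₀ hF₀.ne'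
  · rw [mem_sphere_zero_iff_norm] at hz ⊢
    simp [hz, hr.ne']
  · simp only [hcoeff]
    exact (hint n).sub (hint_const _)
  · simp only [hcoeff]
    rw [Real.circleAverage_fun_sub (hint n) (hint_const _), Real.circleAverage_fun_smul,
      circleAverage_ofReal_re hF, circleAverage_div_pow_mul_two_re hr (by rwa [hr'] at hF)]
    simp [taylorSeries, hF₀']

lemma taylorSeries_mem_coeffHull_of_re_nonneg (hF : DifferentiableOn ℂ F (ball 0 1))
    (hre : ∀ z ∈ ball 0 1, 0 ≤ (F z).re) (hF₀ : 0 < (F 0).re) :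
    taylorSeries F ∈ coeffHull (halfPlaneMap (F 0) '' sphere 0 1) := by
  refine mem_coeffHull_of_tendsto (l := 𝓝[<] (1 : ℝ))
    (S := fun r : ℝ => rescale (r : ℂ) (taylorSeries F)) (fun n => ?_) ?_
  · have : Continuous fun r : ℝ => coeff n (rescale (r : ℂ) (taylorSeries F)) := by
      simp only [coeff_rescale]
      fun_prop
    simpa using (this.tendsto 1).mono_left nhdsWithin_le_nhds
  · filter_upwards [Ioo_mem_nhdsLT (zero_lt_one' ℝ)] with r hr
    exact rescale_taylorSeries_mem_coeffHull hr.1 (hF.mono (closedBall_subset_ball hr.2))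
      (fun z hz => hre z (closedBall_subset_ball hr.2 (sphere_subset_closedBall hz))) hF₀

end Herglotz

section Jack

variable {w : ℂ → ℂ} {z₀ : ℂ}

lemma norm_le_div_mul_norm_of_isMaxOn (hz₀ : z₀ ≠ 0) (hw : DifferentiableOn ℂ w (ball 0 ‖z₀‖))
    (hw₀ : w 0 = 0) (hmax : IsMaxOn (fun z => ‖w z‖) (closedBall 0 ‖z₀‖) z₀) {z : ℂ}
    (hz : ‖z‖ ≤ ‖z₀‖) : ‖w z‖ ≤ ‖w z₀‖ / ‖z₀‖ * ‖z‖ := by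
  rcases hz.eq_or_lt with heq | hlt
  · rw [heq, div_mul_cancel₀ _ (norm_ne_zero_iff.2 hz₀)]
    exact hmax (mem_closedBall_zero_iff.2 hz)
  · have hmaps : Set.MapsTo w (ball 0 ‖z₀‖) (closedBall (w 0) ‖w z₀‖) := fun x hx => by
      rw [hw₀, mem_closedBall_zero_iff]
      exact hmax (ball_subset_closedBall hx)
    simpa [hw₀] using dist_le_div_mul_dist_of_mapsTo_ball hw hmaps (mem_ball_zero_iff.2 hlt)

/-- By the Schwarz lemma, `Re (w (exp s * z₀) / w z₀) - exp (Re s)` is maximal at `s = 0` on the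
left half-plane. -/
lemma re_mul_le_re_of_isMaxOn (hz₀ : z₀ ≠ 0) (hw : DifferentiableOn ℂ w (ball 0 ‖z₀‖))
    (hd : DifferentiableAt ℂ w z₀) (hw₀ : w 0 = 0) (hne : w z₀ ≠ 0)
    (hmax : IsMaxOn (fun z => ‖w z‖) (closedBall 0 ‖z₀‖) z₀) {v : ℂ} (hv : v.re ≤ 0) :
    (v * (z₀ * deriv w z₀ / w z₀)).re ≤ v.re := by
  have hexp : HasDerivAt (fun s : ℂ => Complex.exp s * z₀) z₀ 0 := by
    simpa using (Complex.hasDerivAt_exp 0).mul_const z₀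
  have hφ : HasDerivAt (fun s : ℂ => w (Complex.exp s * z₀) / w z₀)
      (deriv w z₀ * z₀ / w z₀) 0 :=
    (HasDerivAt.comp (h₂ := w) 0 (by simpa using hd.hasDerivAt) hexp).div_const _
  have hψ := (reCLM.hasFDerivAt.comp 0 (hφ.hasFDerivAt.restrictScalars ℝ)).sub
    ((Real.hasDerivAt_exp (0 : ℂ).re).comp_hasFDerivAt 0 reCLM.hasFDerivAt)
  have hmax' : IsMaxOn (fun s : ℂ => (w (Complex.exp s * z₀) / w z₀).re - Real.exp s.re)
      {s | s.re ≤ 0} 0 := fun s (hs : s.re ≤ 0) => by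
    have hnorm : ‖Complex.exp s * z₀‖ = Real.exp s.re * ‖z₀‖ := by rw [norm_mul, norm_exp]
    have hle : ‖Complex.exp s * z₀‖ ≤ ‖z₀‖ :=
      hnorm.trans_le (mul_le_of_le_one_left (norm_nonneg _) (Real.exp_le_one_iff.2 hs))
    have hschwarz := norm_le_div_mul_norm_of_isMaxOn hz₀ hw hw₀ hmax hle
    have : (w (Complex.exp s * z₀) / w z₀).re ≤ Real.exp s.re := by
      refine (re_le_norm _).trans ?_
      rw [norm_div, div_le_iff₀ (norm_pos_iff.2 hne)]
      refine hschwarz.trans_eq ?_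
      rw [hnorm]
      field_simp [norm_ne_zero_iff.2 hz₀]
    simpa [hne] using this
  have hcone : v ∈ posTangentConeAt {s : ℂ | s.re ≤ 0} 0 := by
    refine mem_posTangentConeAt_of_segment_subset ((convex_halfSpace_re_le 0).segment_subset ?_ ?_)
    · simp
    · simpa using hv
  have := hmax'.localize.hasFDerivWithinAt_nonpos hψ.hasFDerivWithinAt hcone
  have hcomm : v * (z₀ * deriv w z₀ / w z₀) = v * (deriv w z₀ * z₀ / w z₀) := by ring
  rw [hcomm]
  simpa using this

/-- Jack's lemma. -/
lemma exists_mul_deriv_eq_mul_of_isMaxOn (hz₀ : z₀ ≠ 0)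
    (hw : DifferentiableOn ℂ w (ball 0 ‖z₀‖)) (hd : DifferentiableAt ℂ w z₀) (hw₀ : w 0 = 0)
    (hne : w z₀ ≠ 0) (hmax : IsMaxOn (fun z => ‖w z‖) (closedBall 0 ‖z₀‖) z₀) :
    ∃ m : ℝ, 1 ≤ m ∧ z₀ * deriv w z₀ = m * w z₀ := by
  set q := z₀ * deriv w z₀ / w z₀ with hq
  have hle {v : ℂ} (hv : v.re ≤ 0) : (v * q).re ≤ v.re :=
    re_mul_le_re_of_isMaxOn hz₀ hw hd hw₀ hne hmax hv
  have hre : 1 ≤ q.re := by simpa using hle (v := -1) (by simp)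
  have him : q.im = 0 := by
    have h₁ := hle (v := I) (by simp)
    have h₂ := hle (v := -I) (by simp)
    simp only [neg_mul, neg_re, I_mul_re, I_re] at h₁ h₂
    linarith
  refine ⟨q.re, hre, ?_⟩
  rw [show ((q.re : ℝ) : ℂ) = q from Complex.ext rfl him.symm, hq, div_mul_cancel₀ _ hne]

lemma exists_isMaxOn_norm_eq_of_le_norm {R : ℝ} (hw : ContinuousOn w (ball 0 R)) {c : ℝ}
    {z₁ : ℂ} (hz₁ : z₁ ∈ ball 0 R) (hc : ‖w 0‖ < c) (h : c ≤ ‖w z₁‖) :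
    ∃ z₀ ∈ ball 0 R, z₀ ≠ 0 ∧ ‖w z₀‖ = c ∧
      IsMaxOn (fun z => ‖w z‖) (closedBall 0 ‖z₀‖) z₀ := by
  have hcont : ContinuousOn (fun z => ‖w z‖) (closedBall 0 ‖z₁‖) :=
    (hw.mono (closedBall_subset_ball (mem_ball_zero_iff.1 hz₁))).norm
  have hK : IsCompact (closedBall 0 ‖z₁‖ ∩ (fun z => ‖w z‖) ⁻¹' Set.Ici c) :=
    (isCompact_closedBall _ _).of_isClosed_subset
      (hcont.preimage_isClosed_of_isClosed isClosed_closedBall isClosed_Ici) Set.inter_subset_left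
  obtain ⟨z₀, ⟨hz₀, hge⟩, hmin⟩ := hK.exists_isMinOn ⟨z₁, by simp, h⟩ continuous_norm.continuousOn
  rw [mem_closedBall_zero_iff] at hz₀
  have hne : z₀ ≠ 0 := by
    rintro rfl
    exact hc.not_ge hge
  have hlt : ∀ z ∈ ball 0 ‖z₀‖, ‖w z‖ < c := fun z hz => by
    rw [mem_ball_zero_iff] at hz
    by_contra! hcon
    exact hz.not_ge (hmin ⟨mem_closedBall_zero_iff.2 (hz.le.trans hz₀), hcon⟩)
  have hle : ∀ z ∈ closedBall 0 ‖z₀‖, ‖w z‖ ≤ c := by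
    rw [← closure_ball (0 : ℂ) (norm_ne_zero_iff.2 hne)]
    refine fun z hz => le_on_closure (fun x hx => (hlt x hx).le) ?_ continuousOn_const hz
    exact hcont.mono (closure_ball_subset_closedBall.trans (closedBall_subset_closedBall hz₀))
  have heq : ‖w z₀‖ = c := (hle z₀ (by simp)).antisymm hge
  exact ⟨z₀, mem_ball_zero_iff.2 (hz₀.trans_lt (mem_ball_zero_iff.1 hz₁)), hne, heq,
    fun z hz => (hle z hz).trans_eq heq.symm⟩

end Jack

section MarxStrohhacker

lemma exists_differentiableOn_sq_eq {h : ℂ → ℂ} {c : ℂ} {r : ℝ}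
    (hh : DifferentiableOn ℂ h (ball c r)) (hne : ∀ z ∈ ball c r, h z ≠ 0) {a : ℂ}
    (ha : a ^ 2 = h c) :
    ∃ k : ℂ → ℂ, DifferentiableOn ℂ k (ball c r) ∧ k c = a ∧ ∀ z ∈ ball c r, k z ^ 2 = h z := by
  obtain ⟨L, hLc, hL⟩ :=
    ((hh.deriv isOpen_ball).div hh hne).isExactOn_ball.with_val_at c (0 : ℂ)
  have hLd : DifferentiableOn ℂ L (ball c r) := fun z hz =>
    (hL z hz).differentiableAt.differentiableWithinAt
  have hlog : Set.EqOn (logDeriv h) (logDeriv fun z => Complex.exp (L z)) (ball c r) :=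
    fun z hz => by
      rw [logDeriv_apply, logDeriv_apply, (hL z hz).cexp.deriv]
      field_simp [Complex.exp_ne_zero]
      rfl
  obtain ⟨b, -, hb⟩ := (logDeriv_eqOn_iff hh hLd.cexp isOpen_ball
    (convex_ball c r).isPreconnected (fun z _ => Complex.exp_ne_zero _) hne).1 hlog
  refine ⟨fun z => a * Complex.exp (L z / 2), (hLd.div_const 2).cexp.const_mul a, by simp [hLc],
    fun z hz => ?_⟩
  have hbc : h c = b := by
    simpa [hLc] using hb (mem_ball_self (nonempty_ball.1 ⟨z, hz⟩))
  simp only [hb hz, Pi.smul_apply, smul_eq_mul, mul_pow, ha, hbc, ← Complex.exp_nat_mul]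
  congr 2
  push_cast
  ring

lemma IsStarlikeFn.exists_eq_mul_sq {g : ℂ → ℂ} (hg : IsStarlikeFn g) :
    ∃ k : ℂ → ℂ, DifferentiableOn ℂ k (ball 0 1) ∧ k 0 = 1 ∧
      ∀ z ∈ ball 0 1, k z ≠ 0 ∧ g z = z * k z ^ 2 := by
  obtain ⟨hgd, hg₀, hg₁, hstar⟩ := hg
  have hgh (z : ℂ) : g z = z * dslope g 0 z := by simpa [hg₀] using (sub_smul_dslope g 0 z).symm
  have hh₀ : dslope g 0 0 = 1 := by rw [dslope_same, hg₁]
  have hne : ∀ z ∈ ball 0 1, dslope g 0 z ≠ 0 := fun z hz h => by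
    rcases eq_or_ne z 0 with rfl | hz₀
    · exact one_ne_zero (hh₀.symm.trans h)
    · simpa [hgh z, h] using hstar z ⟨hz, hz₀⟩
  obtain ⟨k, hkd, hk₀, hk⟩ := exists_differentiableOn_sq_eq
    ((differentiableOn_dslope (ball_mem_nhds 0 one_pos)).2 hgd) hne
    (show (1 : ℂ) ^ 2 = dslope g 0 0 by rw [hh₀, one_pow])
  exact ⟨k, hkd, hk₀, fun z hz =>
    ⟨fun h => hne z hz (by simp [← hk z hz, h]), by rw [hk z hz, hgh]⟩⟩

lemma norm_one_sub_inv_sq {k : ℂ} (hk : k ≠ 0) :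
    ‖1 - k⁻¹‖ ^ 2 = 1 - (2 * k.re - 1) / ‖k‖ ^ 2 := by
  have hk' := norm_ne_zero_iff.2 hk
  rw [show 1 - k⁻¹ = (k - 1) / k by field_simp, norm_div, div_pow, ← normSq_eq_norm_sq (k - 1),
    normSq_sub, normSq_eq_norm_sq k]
  field_simp
  simp only [map_one, mul_one]
  ring

/-- Jack's lemma for `w = 1 - k⁻¹`: at a first point with `‖w‖ = 1`, i.e. `Re k = 1 / 2`, one has
`z * k' / k = m * (k - 1)` with `1 ≤ m`, so that `Re (1 + 2 * z * k' / k) = 1 - m ≤ 0`. -/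
lemma half_le_re_of_re_one_add_pos {k : ℂ → ℂ} {R : ℝ} (hk : DifferentiableOn ℂ k (ball 0 R))
    (hk₀ : k 0 = 1) (hne : ∀ z ∈ ball 0 R, k z ≠ 0)
    (hpos : ∀ z ∈ ball 0 R \ {0}, 0 < (1 + 2 * (z * deriv k z / k z)).re) {z : ℂ}
    (hz : z ∈ ball 0 R) : 1 / 2 ≤ (k z).re := by
  by_contra! hlt
  have hwd : DifferentiableOn ℂ (fun z => 1 - (k z)⁻¹) (ball 0 R) := (hk.inv hne).const_sub 1
  have hw₀ : 1 - (k 0)⁻¹ = 0 := by simp [hk₀]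
  have hge : 1 ≤ ‖1 - (k z)⁻¹‖ := by
    rw [← one_le_sq_iff₀ (norm_nonneg _), norm_one_sub_inv_sq (hne z hz), le_sub_self_iff]
    exact div_nonpos_of_nonpos_of_nonneg (by linarith) (sq_nonneg _)
  obtain ⟨z₀, hz₀, hz₀', hnorm, hmax⟩ := exists_isMaxOn_norm_eq_of_le_norm hwd.continuousOn hz
    (by rw [hw₀, norm_zero]; exact one_pos) hge
  have hk₀ne := hne z₀ hz₀
  have hkz₀ : HasDerivAt k (deriv k z₀) z₀ :=
    (hk.differentiableAt (isOpen_ball.mem_nhds hz₀)).hasDerivAt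
  have hw' := (hkz₀.inv hk₀ne).const_sub 1
  obtain ⟨m, hm, hjack⟩ := exists_mul_deriv_eq_mul_of_isMaxOn hz₀'
    (hwd.mono (ball_subset_ball (mem_ball_zero_iff.1 hz₀).le)) hw'.differentiableAt hw₀
    (norm_ne_zero_iff.1 (hnorm.trans_ne one_ne_zero)) hmax
  have hq : z₀ * deriv k z₀ / k z₀ = m * (k z₀ - 1) := by
    rw [HasDerivAt.deriv (f := fun z => 1 - (k z)⁻¹) hw'] at hjack
    field_simp at hjack ⊢
    exact hjack
  have hre : (k z₀).re = 1 / 2 := by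
    have := norm_one_sub_inv_sq hk₀ne
    rw [hnorm, one_pow, eq_comm, sub_eq_self, div_eq_zero_iff] at this
    linarith [this.resolve_right (by simpa using hk₀ne)]
  have hcontra : 0 < 1 + 2 * (m * ((k z₀).re - 1)) := by simpa [hq] using hpos z₀ ⟨hz₀, hz₀'⟩
  rw [hre] at hcontra
  linarith

/-- The Marx–Strohhäcker theorem: `Re √(g z / z) ≥ 1 / 2` for starlike `g`. -/
lemma IsStarlikeFn.exists_eq_mul_sq_half_le_re {g : ℂ → ℂ} (hg : IsStarlikeFn g) :
    ∃ k : ℂ → ℂ, DifferentiableOn ℂ k (ball 0 1) ∧ k 0 = 1 ∧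
      (∀ z ∈ ball 0 1, 1 / 2 ≤ (k z).re) ∧ ∀ z ∈ ball 0 1, g z = z * k z ^ 2 := by
  obtain ⟨k, hk, hk₀, hgk⟩ := hg.exists_eq_mul_sq
  refine ⟨k, hk, hk₀, fun z hz => half_le_re_of_re_one_add_pos hk hk₀ (fun z hz => (hgk z hz).1)
    (fun z hz => ?_) hz, fun z hz => (hgk z hz).2⟩
  have hkz : HasDerivAt k (deriv k z) z :=
    (hk.differentiableAt (isOpen_ball.mem_nhds hz.1)).hasDerivAt
  have hgz : deriv g z = k z ^ 2 + z * (2 * k z * deriv k z) := by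
    have heq : g =ᶠ[𝓝 z] fun z => z * k z ^ 2 := by
      filter_upwards [isOpen_ball.mem_nhds hz.1] with x hx using (hgk x hx).2
    rw [heq.deriv_eq]
    exact ((hasDerivAt_id z).mul (hkz.pow 2)).deriv.trans (by simp)
  have hkne := (hgk z hz.1).1
  have hz₀ : z ≠ 0 := hz.2
  convert hg.2.2.2 z hz using 2
  rw [hgz, (hgk z hz.1).2]
  field_simp

end MarxStrohhacker

section CloseToConvex

lemma taylorSeries_mem_coeffHull_of_half_le_re {k : ℂ → ℂ} (hk : DifferentiableOn ℂ k (ball 0 1))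
    (hk₀ : k 0 = 1) (hre : ∀ z ∈ ball 0 1, 1 / 2 ≤ (k z).re) :
    taylorSeries k ∈ coeffHull (cauchyPow 1 '' sphere 0 1) := by
  have hF₀ : -1 + 2 * k 0 = 1 := by rw [hk₀]; norm_num
  have hherglotz := taylorSeries_mem_coeffHull_of_re_nonneg (F := fun z => -1 + 2 * k z)
    ((hk.const_mul 2).const_add _)
    (fun z hz => by
      have := hre z hz
      simp only [add_re, neg_re, one_re, mul_re, re_ofNat, im_ofNat, zero_mul, sub_zero]
      linarith)
    (by simp [hF₀])
  rw [hF₀, taylorSeries_const_add_const_mul] at hherglotz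
  have hhalf : C (2 : ℂ) * C (2⁻¹ : ℂ) = 1 := by rw [← map_mul]; simp
  have hinv (A : ℂ⟦X⟧) : (C (-1 : ℂ) + C (2 : ℂ) * A) * C (2⁻¹ : ℂ) + C (2⁻¹ : ℂ) = A := by
    rw [map_neg, map_one]
    linear_combination A * hhalf
  have := mul_add_mem_coeffHull (E := cauchyPow 1 '' sphere 0 1) hherglotz
    (C (2⁻¹ : ℂ)) (C (2⁻¹ : ℂ)) fun T hT => by
      obtain ⟨y, hy, rfl⟩ := hT
      refine subset_coeffHull _ ⟨y, hy, ?_⟩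
      rw [← hinv (cauchyPow 1 y), halfPlaneMap]
      simp [sub_eq_neg_add]
  rwa [hinv] at this

/-- The power series of the functions `(1 + x z) / (1 - y z)ᵖ` with `‖x‖ = ‖y‖ = 1`: normalized
half-plane maps for `p = 1`, derivatives of the extreme close-to-convex functions for `p = 3`. -/
def unimodularQuotients (p : ℕ) : Set ℂ⟦X⟧ :=
  Set.image2 (fun x y => (1 + C x * X) * cauchyPow p y) (sphere 0 1) (sphere 0 1)

lemma one_sub_mul_cauchyPow_one (y : ℂ) : (1 - C y * X) * cauchyPow 1 y = 1 := by
  have hX : rescale y (1 - X : ℂ⟦X⟧) = 1 - C y * X := by simp [rescale_X]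
  rw [cauchyPow, ← hX, ← map_mul, ← pow_one (1 - X : ℂ⟦X⟧), ← invOneSubPow_inv_eq_one_sub_pow,
    Units.inv_eq_val_inv, Units.inv_mul, map_one]

lemma halfPlaneMap_mul_conj_mem_unimodularQuotients {b y : ℂ} (hb : ‖b‖ = 1) (hy : ‖y‖ = 1) :
    halfPlaneMap b y * C (conj b) ∈ unimodularQuotients 1 := by
  refine ⟨conj b ^ 2 * y, by simp [hb, hy], y, by simpa using hy, ?_⟩
  have hbb : C b * C (conj b) = 1 := by rw [← map_mul, mul_conj']; simp [hb]
  simp only [halfPlaneMap, ← add_conj, map_add, map_mul, map_pow]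
  linear_combination -(C (conj b) ^ 2) * one_sub_mul_cauchyPow_one y - cauchyPow 1 y * hbb

lemma taylorSeries_mem_coeffHull_of_re_mul_pos {p : ℂ → ℂ} (hp : DifferentiableOn ℂ p (ball 0 1))
    (hp₀ : p 0 = 1) {b : ℂ} (hb : ‖b‖ = 1) (hre : ∀ z ∈ ball 0 1, 0 < (b * p z).re) :
    taylorSeries p ∈ coeffHull (unimodularQuotients 1) := by
  have hherglotz := taylorSeries_mem_coeffHull_of_re_nonneg (F := fun z => 0 + b * p z)
    ((hp.const_mul b).const_add 0) (fun z hz => by simpa using (hre z hz).le)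
    (by simpa using hre 0 (mem_ball_self one_pos))
  rw [taylorSeries_const_add_const_mul, hp₀, zero_add, mul_one, map_zero, zero_add] at hherglotz
  have hbb : C b * C (conj b) = 1 := by rw [← map_mul, mul_conj']; simp [hb]
  have := mul_add_mem_coeffHull (E := unimodularQuotients 1) hherglotz (C (conj b)) 0
    fun T hT => by
      obtain ⟨y, hy, rfl⟩ := hT
      rw [add_zero]
      exact subset_coeffHull _
        (halfPlaneMap_mul_conj_mem_unimodularQuotients hb (mem_sphere_zero_iff_norm.1 hy))
  rwa [add_zero, mul_right_comm, hbb, one_mul] at this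

lemma IsCloseToConvex.exists_deriv_eq_mul_sq {f : ℂ → ℂ} (hf : IsCloseToConvex f) :
    ∃ (b : ℂ) (p k : ℂ → ℂ), ‖b‖ = 1 ∧
      DifferentiableOn ℂ p (ball 0 1) ∧ p 0 = 1 ∧ (∀ z ∈ ball 0 1, 0 < (b * p z).re) ∧
      DifferentiableOn ℂ k (ball 0 1) ∧ k 0 = 1 ∧ (∀ z ∈ ball 0 1, 1 / 2 ≤ (k z).re) ∧
      ∀ z ∈ ball 0 1, deriv f z = p z * k z ^ 2 := by
  obtain ⟨hfd, -, hf₁, θ, g, hg, hre⟩ := hf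
  obtain ⟨k, hkd, hk₀, hkre, hgk⟩ := hg.exists_eq_mul_sq_half_le_re
  have hkne : ∀ z ∈ ball 0 1, k z ≠ 0 := fun z hz h => by
    have := hkre z hz
    norm_num [h] at this
  set b := Complex.exp (θ * I)
  have hpd : DifferentiableOn ℂ (fun z => deriv f z / k z ^ 2) (ball 0 1) :=
    (hfd.deriv isOpen_ball).div (hkd.pow 2) fun z hz => pow_ne_zero 2 (hkne z hz)
  have hpos : ∀ z ∈ ball 0 1 \ {0}, 0 < (b * (deriv f z / k z ^ 2)).re := fun z hz => by
    have hz₀ : z ≠ 0 := hz.2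
    have hkz := hkne z hz.1
    convert hre z hz using 2
    rw [hgk z hz.1]
    field_simp
  have hpos₀ : 0 < (b * (deriv f 0 / k 0 ^ 2)).re := by
    have hball : closedBall (0 : ℂ) |1 / 2| ⊆ ball 0 1 := closedBall_subset_ball (by norm_num)
    refine re_pos_of_forall_sphere_re_pos (c := 0) (r := 1 / 2)
      (F := fun z => b * (deriv f z / k z ^ 2)) ((hpd.const_mul b).mono hball)
      fun z hz => hpos z ⟨hball (sphere_subset_closedBall hz), ?_⟩
    exact ne_of_mem_sphere hz (by norm_num)
  refine ⟨b, _, k, norm_exp_ofReal_mul_I θ, hpd, by simp [hf₁, hk₀], fun z hz => ?_, hkd, hk₀,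
    hkre, fun z hz => (div_mul_cancel₀ _ (pow_ne_zero 2 (hkne z hz))).symm⟩
  rcases eq_or_ne z 0 with rfl | hz₀
  · exact hpos₀
  · exact hpos z ⟨hz, hz₀⟩

lemma IsCloseToConvex.taylorSeries_deriv_mem_coeffHull {f : ℂ → ℂ} (hf : IsCloseToConvex f) :
    taylorSeries (deriv f) ∈ coeffHull (unimodularQuotients 3) := by
  obtain ⟨b, p, k, hb, hp, hp₀, hpre, hk, hk₀, hkre, heq⟩ := hf.exists_deriv_eq_mul_sq
  have hnhds : ball (0 : ℂ) 1 ∈ 𝓝 0 := ball_mem_nhds 0 one_pos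
  have hpa := hp.analyticAt hnhds
  have hka := hk.analyticAt hnhds
  have hcongr : deriv f =ᶠ[𝓝 0] p * (k * k) := by
    filter_upwards [hnhds] with z hz
    simp [heq z hz, sq]
  have hkmem := taylorSeries_mem_coeffHull_of_half_le_re hk hk₀ hkre
  rw [taylorSeries_congr hcongr, taylorSeries_mul hpa (hka.mul hka), taylorSeries_mul hka hka]
  have hkk : taylorSeries k * taylorSeries k ∈ coeffHull (cauchyPow 2 '' sphere 0 1) := by
    refine mul_mem_coeffHull hkmem hkmem ?_
    rintro _ ⟨y, hy, rfl⟩ _ ⟨u, hu, rfl⟩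
    exact cauchyPow_mul_cauchyPow_one_mem_coeffHull 0 (mem_sphere_zero_iff_norm.1 hy).le
      (mem_sphere_zero_iff_norm.1 hu).le
  refine mul_mem_coeffHull (taylorSeries_mem_coeffHull_of_re_mul_pos hp hp₀ hb hpre) hkk ?_
  rintro _ ⟨x, hx, y, hy, rfl⟩ _ ⟨u, hu, rfl⟩
  have := mul_add_mem_coeffHull (E := unimodularQuotients 3)
    (cauchyPow_mul_cauchyPow_one_mem_coeffHull 1 (mem_sphere_zero_iff_norm.1 hu).le
      (mem_sphere_zero_iff_norm.1 hy).le) (1 + C x * X) 0 fun T hT => by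
      obtain ⟨v, hv, rfl⟩ := hT
      exact subset_coeffHull _ ⟨x, hx, v, hv, by rw [add_zero, mul_comm]⟩
  convert this using 1
  ring

end CloseToConvex

section ExtremalProblem

lemma three_le_mul_of_le {n lam : ℝ} (hn : 0 < n)
    (hlam : (3 * n + √(5 * n ^ 2 - 4 * n)) / (n ^ 2 + n) ≤ lam) : 3 ≤ lam * (n + 1) := by
  rw [div_le_iff₀ (by positivity)] at hlam
  refine le_of_mul_le_mul_right ?_ hn
  linarith [Real.sqrt_nonneg (5 * n ^ 2 - 4 * n)]

lemma quadratic_nonneg_of_le {n lam : ℝ} (hn : 1 ≤ n)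
    (hlam : (3 * n + √(5 * n ^ 2 - 4 * n)) / (n ^ 2 + n) ≤ lam) :
    0 ≤ lam ^ 2 * n * (n + 1) - 6 * n * lam + 4 := by
  rw [div_le_iff₀ (by positivity)] at hlam
  have hsq : 5 * n ^ 2 - 4 * n ≤ (lam * (n ^ 2 + n) - 3 * n) ^ 2 := by
    rw [← Real.sq_sqrt (show 0 ≤ 5 * n ^ 2 - 4 * n by nlinarith)]
    exact pow_le_pow_left₀ (Real.sqrt_nonneg _) (by linarith) 2
  refine nonneg_of_mul_nonneg_left (b := n * (n + 1)) ?_ (by positivity)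
  linarith

lemma mul_sq_re_sub_re_le_of_norm_eq_one {n lam : ℝ} (hn : 1 ≤ n) (h₃ : 3 ≤ lam * (n + 1))
    (hquad : 0 ≤ lam ^ 2 * n * (n + 1) - 6 * n * lam + 4) {a b : ℂ} (ha : ‖a‖ = 1)
    (hb : ‖b‖ = 1) :
    lam * ((n + 1) / 2 * a.re + (n - 1) / 2 * b.re) ^ 2 -
        (n * (a * a).re + (n - 1) * (a * b).re) ≤ lam * n ^ 2 - (2 * n - 1) := by
  have him {z : ℂ} (hz : ‖z‖ = 1) : z.re ^ 2 = 1 - z.im ^ 2 := by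
    rw [← one_pow 2, ← hz, ← normSq_eq_norm_sq, normSq_apply]
    ring
  set e := lam * n - 1 with he
  have he₀ : 0 < e := by nlinarith
  have hα : 0 ≤ lam * n * (n + 1) - (5 * n - 1) - (n - 1) / e := by
    rw [sub_nonneg, div_le_iff₀ he₀]
    linarith [mul_nonneg (zero_le_one.trans hn) hquad]
  have hβ : 0 ≤ lam * (n ^ 2 - 1) / 4 - (n - 1) / 2 := by nlinarith
  have hγ : 0 ≤ (n - 1) / 2 := by linarith
  have hsos : lam * n ^ 2 - (2 * n - 1) - (lam * ((n + 1) / 2 * a.re + (n - 1) / 2 * b.re) ^ 2 -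
        (n * (a * a).re + (n - 1) * (a * b).re)) =
      (lam * n * (n + 1) - (5 * n - 1) - (n - 1) / e) / 2 * a.im ^ 2 +
        (lam * (n ^ 2 - 1) / 4 - (n - 1) / 2) * (a.re - b.re) ^ 2 +
        (n - 1) / 2 * ((a.im - e * b.im) ^ 2 / e) := by
    have hexpand : (a.im - e * b.im) ^ 2 / e =
        a.im ^ 2 / e - 2 * a.im * b.im + e * b.im ^ 2 := by
      field_simp
      ring
    rw [hexpand, mul_re, mul_re, he]
    linear_combination (n - lam * (n + 1) ^ 2 / 4 - lam * (n ^ 2 - 1) / 4 + (n - 1) / 2) * him ha +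
      (n - 1) / 2 * (1 - lam * n) * him hb
  rw [← sub_nonneg, hsos]
  exact add_nonneg (add_nonneg (mul_nonneg (div_nonneg hα zero_le_two) (sq_nonneg _))
    (mul_nonneg hβ (sq_nonneg _))) (mul_nonneg hγ (div_nonneg (sq_nonneg _) he₀.le))

lemma coeff_one_add_mul_cauchyPow_three (x y : ℂ) (m : ℕ) :
    coeff m ((1 + C x * X) * cauchyPow 3 y) =
      (m + 1) * ((m + 2) / 2 * y ^ m + m / 2 * (x * y ^ (m - 1))) := by
  have hchoose (k : ℕ) : (((2 + k).choose 2 : ℕ) : ℂ) = (k + 2) * (k + 1) / 2 := by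
    rw [Nat.cast_choose_two]
    push_cast
    ring
  rw [add_mul, one_mul, mul_assoc, map_add, coeff_C_mul, coeff_cauchyPow_succ, hchoose]
  cases m with
  | zero => simp
  | succ m =>
    rw [coeff_succ_X_mul, coeff_cauchyPow_succ, hchoose, Nat.add_sub_cancel]
    push_cast
    ring

lemma mul_sq_re_sub_re_le_of_mem_unimodularQuotients {m : ℕ} {lam : ℝ}
    (h₃ : 3 ≤ lam * (m + 2))
    (hquad : 0 ≤ lam ^ 2 * (m + 1) * (m + 2) - 6 * (m + 1) * lam + 4) {ζ : ℂ} (hζ : ‖ζ‖ = 1)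
    {T : ℂ⟦X⟧} (hT : T ∈ unimodularQuotients 3) :
    lam * (ζ * (coeff m T / (m + 1))).re ^ 2 - (ζ ^ 2 * (coeff (2 * m) T / (2 * m + 1))).re ≤
      lam * (m + 1) ^ 2 - (2 * m + 1) := by
  obtain ⟨x, hx, y, hy, rfl⟩ := hT
  rw [mem_sphere_zero_iff_norm] at hx hy
  set a := ζ * y ^ m with ha
  set b := ζ * (x * y ^ (m - 1)) with hb
  have hm : (m : ℂ) + 1 ≠ 0 := by exact_mod_cast m.succ_ne_zero
  have h2m : 2 * (m : ℂ) + 1 ≠ 0 := by exact_mod_cast (2 * m).succ_ne_zero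
  have h₁ : ζ * (coeff m ((1 + C x * X) * cauchyPow 3 y) / (m + 1)) =
      (((m + 2) / 2 : ℝ) : ℂ) * a + ((m / 2 : ℝ) : ℂ) * b := by
    rw [coeff_one_add_mul_cauchyPow_three, ha, hb]
    push_cast
    field_simp
  have h₂ : ζ ^ 2 * (coeff (2 * m) ((1 + C x * X) * cauchyPow 3 y) / (2 * m + 1)) =
      ((m + 1 : ℝ) : ℂ) * (a * a) + ((m : ℝ) : ℂ) * (a * b) := by
    have hpow : (m : ℂ) * y ^ (2 * m - 1) = m * (y ^ m * y ^ (m - 1)) := by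
      cases m with
      | zero => simp
      | succ m => rw [← pow_add, show 2 * (m + 1) - 1 = m + 1 + (m + 1 - 1) by lia]
    rw [coeff_one_add_mul_cauchyPow_three, ha, hb]
    push_cast
    field_simp
    linear_combination ζ ^ 2 * x * hpow
  have := mul_sq_re_sub_re_le_of_norm_eq_one (n := m + 1) (lam := lam) (a := a) (b := b)
    (by simp) (by linarith) (by linarith) (by simp [ha, hζ, hy]) (by simp [hb, hζ, hx, hy])
  simp only [h₁, h₂, add_re, re_ofReal_mul]
  linarith

lemma exists_norm_eq_one_and_sq_mul_eq_norm (z : ℂ) : ∃ ζ : ℂ, ‖ζ‖ = 1 ∧ ζ ^ 2 * z = ‖z‖ := by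
  obtain ⟨u, hu, huz⟩ := RCLike.exists_norm_eq_mul_self z
  obtain ⟨ζ, rfl⟩ := IsAlgClosed.exists_pow_nat_eq u two_pos
  refine ⟨ζ, ?_, huz.symm⟩
  rwa [norm_pow, pow_eq_one_iff_of_nonneg (norm_nonneg ζ) two_ne_zero] at hu

lemma norm_le_of_mem_coeffHull_unimodularQuotients {m : ℕ} {lam : ℝ}
    (h₃ : 3 ≤ lam * (m + 2))
    (hquad : 0 ≤ lam ^ 2 * (m + 1) * (m + 2) - 6 * (m + 1) * lam + 4) {S : ℂ⟦X⟧}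
    (hS : S ∈ coeffHull (unimodularQuotients 3)) :
    ‖lam * (coeff m S / (m + 1)) ^ 2 - coeff (2 * m) S / (2 * m + 1)‖ ≤
      lam * (m + 1) ^ 2 - (2 * m + 1) := by
  have hlam : 0 ≤ lam := nonneg_of_mul_nonneg_left (zero_le_three.trans h₃) (by positivity)
  obtain ⟨ζ, hζ, hrot⟩ := exists_norm_eq_one_and_sq_mul_eq_norm
    (lam * (coeff m S / (m + 1)) ^ 2 - coeff (2 * m) S / (2 * m + 1))
  have hΛ₁ (T : ℂ⟦X⟧) : ((ζ / (m + 1)) • coeff (R := ℂ) m) T = ζ * (coeff m T / (m + 1)) := by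
    rw [LinearMap.smul_apply, smul_eq_mul, div_mul_eq_mul_div, mul_div_assoc]
  have hΛ₂ (T : ℂ⟦X⟧) : ((-(ζ ^ 2 / (2 * m + 1))) • coeff (R := ℂ) (2 * m)) T =
      -(ζ ^ 2 * (coeff (2 * m) T / (2 * m + 1))) := by
    rw [LinearMap.smul_apply, smul_eq_mul, neg_mul, div_mul_eq_mul_div, mul_div_assoc]
  have hconvex := mul_sq_re_add_re_le_of_mem_coeffHull
    (Submodule.smul_mem _ (ζ / (m + 1)) (coeff_mem_coeffDual m))
    (Submodule.smul_mem _ (-(ζ ^ 2 / (2 * m + 1))) (coeff_mem_coeffDual (2 * m))) hlam hS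
    fun T hT => by
      rw [hΛ₁, hΛ₂, neg_re, ← sub_eq_add_neg]
      exact mul_sq_re_sub_re_le_of_mem_unimodularQuotients h₃ hquad hζ hT
  rw [hΛ₁, hΛ₂, neg_re, ← sub_eq_add_neg] at hconvex
  set A := ζ * (coeff m S / (m + 1)) with hA
  set B := ζ ^ 2 * (coeff (2 * m) S / (2 * m + 1)) with hB
  calc ‖lam * (coeff m S / (m + 1)) ^ 2 - coeff (2 * m) S / (2 * m + 1)‖
      = (lam * A ^ 2 - B).re := by
        rw [← ofReal_re ‖_‖, ← hrot, hA, hB]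
        congr 1
        ring
    _ = lam * (A.re ^ 2 - A.im ^ 2) - B.re := by
        rw [sub_re, re_ofReal_mul, sq A, mul_re, sq, sq]
    _ ≤ lam * A.re ^ 2 - B.re := by
        gcongr
        exact sub_le_self _ (sq_nonneg _)
    _ ≤ lam * (m + 1) ^ 2 - (2 * m + 1) := hconvex

end ExtremalProblem

theorem generalized_zalcman_closeToConvex_large_lambda_general
    (n : ℕ) (hn : 1 ≤ n) (lam : ℝ)
    (hlam : (3 * (n : ℝ) + Real.sqrt (5 * (n : ℝ) ^ 2 - 4 * n)) / ((n : ℝ) ^ 2 + n) ≤ lam)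
    (f : ℂ → ℂ) (hf : IsCloseToConvex f) :
    ‖(lam : ℂ) * (taylorCoeff f n) ^ 2 - taylorCoeff f (2 * n - 1)‖ ≤
      lam * (n : ℝ) ^ 2 - (2 * (n : ℝ) - 1) := by
  have hn₁ : (1 : ℝ) ≤ n := mod_cast hn
  have h₃ := three_le_mul_of_le (zero_lt_one.trans_le hn₁) hlam
  have hquad := quadratic_nonneg_of_le hn₁ hlam
  obtain ⟨m, rfl⟩ := Nat.exists_eq_add_of_le' hn
  push_cast at h₃ hquad
  have hbound := norm_le_of_mem_coeffHull_unimodularQuotients (m := m) (lam := lam)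
    (by linarith) (by linarith) hf.taylorSeries_deriv_mem_coeffHull
  have hm : (m : ℂ) + 1 ≠ 0 := mod_cast m.succ_ne_zero
  have h2m : 2 * (m : ℂ) + 1 ≠ 0 := mod_cast (2 * m).succ_ne_zero
  simp only [coeff_taylorSeries_deriv, Nat.cast_mul, Nat.cast_ofNat, mul_div_cancel_left₀ _ hm,
    mul_div_cancel_left₀ _ h2m] at hbound
  rw [show 2 * (m + 1) - 1 = 2 * m + 1 by lia]
  push_cast
  linarith

theorem generalized_zalcman_closeToConvex_large_lambda
    (n : ℕ) (hn : 3 ≤ n) (lam : ℝ)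
    (hlam : (3 * (n : ℝ) + Real.sqrt (5 * (n : ℝ) ^ 2 - 4 * n)) / ((n : ℝ) ^ 2 + n) ≤ lam)
    (f : ℂ → ℂ) (hf : IsCloseToConvex f) :
    ‖(lam : ℂ) * (taylorCoeff f n) ^ 2 - taylorCoeff f (2 * n - 1)‖ ≤
      lam * (n : ℝ) ^ 2 - (2 * (n : ℝ) - 1) :=
  generalized_zalcman_closeToConvex_large_lambda_general n (by lia) lam hlam f hf
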